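/- Let 0 < T_α ≤ T, let integers α < β index tenor dates, let u_α > u_{α+1} ≥ … ≥ u_β ≥ 0, let K ∈ ℝ, let Δ_{α+1},…,Δ_β > 0, and let κ ≥ 0. Writing G(u) := Φ(κ/√T_α − u √T_α) − Φ(−κ/√T_α − u √T_α) with Φ the standard normal cumulative distribution function, one has ∫_{−κ}^{κ} ( e^{u_β²(T−T_α)/2} cosh(u_β x) − e^{u_α²(T−T_α)/2} cosh(u_α x) + K Σ_{k=α+1}^{β} Δ_k e^{u_k²(T−T_α)/2} cosh(u_k x) ) · (1/√(2π T_α)) e^{−x²/(2T_α)} dx = e^{u_β² T/2} G(u_β) − e^{u_α² T/2} G(u_α) + K Σ_{k=α+1}^{β} Δ_k e^{u_k² T/2} G(u_k). -/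

import Mathlib

open Real Set Finset

open MeasureTheory in
lemma aux_phi (a b : ℝ) :
    (∫ s in Iic b, (1 / Real.sqrt (2 * Real.pi)) * Real.exp (-s ^ 2 / 2))
      - (∫ s in Iic a, (1 / Real.sqrt (2 * Real.pi)) * Real.exp (-s ^ 2 / 2))
      = ∫ s in a..b, (1 / Real.sqrt (2 * Real.pi)) * Real.exp (-s ^ 2 / 2) := by
  have hi : Integrable (fun s : ℝ => (1 / Real.sqrt (2 * Real.pi)) * Real.exp (-s ^ 2 / 2)) := by
    have h := (integrable_exp_neg_mul_sq (b := 1 / 2) (by norm_num)).const_mul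
      (1 / Real.sqrt (2 * Real.pi))
    refine h.congr (Filter.Eventually.of_forall fun s => ?_)
    have e : -(1 / 2) * s ^ 2 = -s ^ 2 / 2 := by ring
    simp only [e]
  exact intervalIntegral.integral_Iic_sub_Iic hi.integrableOn hi.integrableOn

lemma aux_exp (t κ w : ℝ) (ht : 0 < t) :
    (∫ x in (-κ)..κ, Real.exp (w * x) *
        ((1 / Real.sqrt (2 * Real.pi * t)) * Real.exp (-x ^ 2 / (2 * t))))
      = Real.exp (w ^ 2 * t / 2) *
        ∫ s in (-κ / Real.sqrt t - w * Real.sqrt t)..(κ / Real.sqrt t - w * Real.sqrt t),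
          (1 / Real.sqrt (2 * Real.pi)) * Real.exp (-s ^ 2 / 2) := by
  have hs : 0 < Real.sqrt t := Real.sqrt_pos.mpr ht
  have hsq : Real.sqrt t ^ 2 = t := Real.sq_sqrt ht.le
  have h := intervalIntegral.integral_comp_div_sub (a := -κ) (b := κ)
    (fun s : ℝ => (1 / Real.sqrt (2 * Real.pi)) * Real.exp (-s ^ 2 / 2)) hs.ne'
    (w * Real.sqrt t)
  have h2 : (∫ s in (-κ / Real.sqrt t - w * Real.sqrt t)..(κ / Real.sqrt t - w * Real.sqrt t),
          (1 / Real.sqrt (2 * Real.pi)) * Real.exp (-s ^ 2 / 2)) = (1 / Real.sqrt t) *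
      ∫ x in (-κ)..κ, (1 / Real.sqrt (2 * Real.pi)) *
        Real.exp (-(x / Real.sqrt t - w * Real.sqrt t) ^ 2 / 2) := by
    rw [h, smul_eq_mul]
    field_simp
  rw [h2, ← intervalIntegral.integral_const_mul, ← intervalIntegral.integral_const_mul]
  refine intervalIntegral.integral_congr fun x _ => ?_
  show _ = _
  have e : Real.exp (w * x) * Real.exp (-x ^ 2 / (2 * t)) = Real.exp (w ^ 2 * t / 2) *
      Real.exp (-(x / Real.sqrt t - w * Real.sqrt t) ^ 2 / 2) := by
    rw [← Real.exp_add, ← Real.exp_add]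
    congr 1
    have : (x / Real.sqrt t - w * Real.sqrt t) ^ 2 = x ^ 2 / t - 2 * w * x + w ^ 2 * t := by
      rw [sub_sq, div_pow, mul_pow, hsq]
      field_simp
    rw [this]
    field_simp
    ring
  have hr : 1 / Real.sqrt (2 * Real.pi * t) = 1 / Real.sqrt t * (1 / Real.sqrt (2 * Real.pi)) := by
    rw [Real.sqrt_mul (by positivity)]
    field_simp
  rw [hr]
  linear_combination (1 / Real.sqrt t * (1 / Real.sqrt (2 * Real.pi))) * e

lemma aux_cosh (t κ w : ℝ) :
    (∫ x in (-κ)..κ, Real.cosh (w * x) *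
        ((1 / Real.sqrt (2 * Real.pi * t)) * Real.exp (-x ^ 2 / (2 * t))))
      = ∫ x in (-κ)..κ, Real.exp (w * x) *
        ((1 / Real.sqrt (2 * Real.pi * t)) * Real.exp (-x ^ 2 / (2 * t))) := by
  have hn := intervalIntegral.integral_comp_neg (a := -κ) (b := κ)
    (fun x : ℝ => Real.exp (w * x) *
        ((1 / Real.sqrt (2 * Real.pi * t)) * Real.exp (-x ^ 2 / (2 * t))))
  simp only [neg_neg, neg_sq] at hn
  have hc : ∀ x : ℝ, Real.cosh (w * x) *
        ((1 / Real.sqrt (2 * Real.pi * t)) * Real.exp (-x ^ 2 / (2 * t)))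
      = (1 / 2) * (Real.exp (w * x) *
        ((1 / Real.sqrt (2 * Real.pi * t)) * Real.exp (-x ^ 2 / (2 * t)))) +
        (1 / 2) * (Real.exp (w * -x) *
        ((1 / Real.sqrt (2 * Real.pi * t)) * Real.exp (-x ^ 2 / (2 * t)))) := by
    intro x
    rw [Real.cosh_eq, mul_neg]
    ring
  simp_rw [hc]
  rw [intervalIntegral.integral_add, intervalIntegral.integral_const_mul,
    intervalIntegral.integral_const_mul, hn]
  · ring
  · exact Continuous.intervalIntegrable (by fun_prop) _ _
  · exact Continuous.intervalIntegrable (by fun_prop) _ _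

theorem stmt_13 (T Tα : ℝ) (hTα : 0 < Tα) (hTαT : Tα ≤ T)
    (α β : ℤ) (hαβ : α < β)
    (u : ℤ → ℝ) (huα : u (α + 1) < u α)
    (hudec : ∀ k : ℤ, α + 1 ≤ k → k < β → u (k + 1) ≤ u k)
    (huβ : 0 ≤ u β)
    (Δ : ℤ → ℝ) (hΔ : ∀ k ∈ Finset.Icc (α + 1) β, 0 < Δ k)
    (K κ : ℝ) (hκ : 0 ≤ κ)
    (Φ : ℝ → ℝ)
    (hΦ : ∀ y : ℝ, Φ y = ∫ s in Iic y, (1 / Real.sqrt (2 * Real.pi)) * Real.exp (-s ^ 2 / 2))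
    (G : ℝ → ℝ)
    (hG : ∀ w : ℝ, G w = Φ (κ / Real.sqrt Tα - w * Real.sqrt Tα)
      - Φ (-κ / Real.sqrt Tα - w * Real.sqrt Tα)) :
    (∫ x in (-κ)..κ,
        (Real.exp (u β ^ 2 * (T - Tα) / 2) * Real.cosh (u β * x)
          - Real.exp (u α ^ 2 * (T - Tα) / 2) * Real.cosh (u α * x)
          + K * ∑ k ∈ Finset.Icc (α + 1) β,
              Δ k * Real.exp (u k ^ 2 * (T - Tα) / 2) * Real.cosh (u k * x)) *
          (1 / Real.sqrt (2 * Real.pi * Tα)) * Real.exp (-x ^ 2 / (2 * Tα)))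
      = Real.exp (u β ^ 2 * T / 2) * G (u β)
        - Real.exp (u α ^ 2 * T / 2) * G (u α)
        + K * ∑ k ∈ Finset.Icc (α + 1) β, Δ k * Real.exp (u k ^ 2 * T / 2) * G (u k) := by
  have key : ∀ w : ℝ, (∫ x in (-κ)..κ, Real.exp (w ^ 2 * (T - Tα) / 2) * (Real.cosh (w * x) *
        ((1 / Real.sqrt (2 * Real.pi * Tα)) * Real.exp (-x ^ 2 / (2 * Tα)))))
      = Real.exp (w ^ 2 * T / 2) * G w := by
    intro w
    rw [intervalIntegral.integral_const_mul, aux_cosh, aux_exp Tα κ w hTα, hG, hΦ, hΦ, aux_phi,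
      ← mul_assoc, ← Real.exp_add]
    congr 2
    ring
  have hint : ∀ w : ℝ, IntervalIntegrable (fun x : ℝ => Real.exp (w ^ 2 * (T - Tα) / 2) *
      (Real.cosh (w * x) *
        ((1 / Real.sqrt (2 * Real.pi * Tα)) * Real.exp (-x ^ 2 / (2 * Tα)))))
      MeasureTheory.volume (-κ) κ := by
    intro w
    have : Continuous fun x : ℝ => Real.cosh (w * x) :=
      Real.continuous_cosh.comp (by fun_prop)
    exact Continuous.intervalIntegrable (by fun_prop) _ _
  have hsum : IntervalIntegrable (fun x : ℝ => ∑ k ∈ Finset.Icc (α + 1) β, Δ k *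
      (Real.exp (u k ^ 2 * (T - Tα) / 2) * (Real.cosh (u k * x) *
        ((1 / Real.sqrt (2 * Real.pi * Tα)) * Real.exp (-x ^ 2 / (2 * Tα))))))
      MeasureTheory.volume (-κ) κ := by
    have hc : ∀ w : ℝ, Continuous fun x : ℝ => Real.cosh (w * x) := fun w =>
      Real.continuous_cosh.comp (by fun_prop)
    refine Continuous.intervalIntegrable (continuous_finsetSum _ fun k _ => ?_) _ _
    have := hc (u k)
    fun_prop
  have hrhs : ∑ k ∈ Finset.Icc (α + 1) β, Δ k * Real.exp (u k ^ 2 * T / 2) * G (u k)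
      = ∑ k ∈ Finset.Icc (α + 1) β, Δ k * (Real.exp (u k ^ 2 * T / 2) * G (u k)) :=
    Finset.sum_congr rfl fun k _ => by ring
  rw [hrhs]
  simp_rw [← key]
  simp_rw [← intervalIntegral.integral_const_mul (Δ _)]
  rw [← intervalIntegral.integral_finsetSum (fun k _ => (hint (u k)).const_mul (Δ k)),
    ← intervalIntegral.integral_const_mul, ← intervalIntegral.integral_sub (hint _) (hint _),
    ← intervalIntegral.integral_add ((hint _).sub (hint _)) (hsum.const_mul K)]
  refine intervalIntegral.integral_congr fun x _ => ?_
  show _ = _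
  rw [add_mul, add_mul, mul_assoc K, mul_assoc K, Finset.sum_mul, Finset.sum_mul]
  congr 1
  · ring
  · congr 1
    exact Finset.sum_congr rfl fun k _ => by ring
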